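/- For every natural number n, setting l = 2^(2n+1), the exponent of the prime 5 in the prime factorization of l^12 * (l - 1) * (l^3 + 1) * (l^4 - 1) * (l^6 + 1) is exactly twice the exponent of 5 in the prime factorization of l^2 + 1. -/

import Mathlib

/-!
Since `l ^ 4 - 1 = (l ^ 2 + 1) * (l ^ 2 - 1)` and `l ^ 6 + 1 = (l ^ 2 + 1) * (l ^ 4 - l ^ 2 + 1)`,
the order of `²F₄(l)` is `(l ^ 2 + 1) ^ 2` times a cofactor. Modulo a prime divisor `p`
of `l ^ 2 + 1` we have `l ^ 2 = -1`, and the cofactor becomes `-12 * l`, which is invertible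
unless `p` is `2` or `3`; the prime `3` cannot occur because `-1` is not a square modulo `3`.
For `l = 2 ^ (2 * n + 1)`, the prime `5 = 4 + 1` divides `l ^ 2 + 1 = 4 ^ (2 * n + 1) + 1`.
-/

lemma ree_cofactor_eq_of_sq_eq_neg_one {R : Type*} [CommRing R] {x : R} (hx : x ^ 2 = -1) :
    x ^ 12 * (x - 1) * (x ^ 3 + 1) * (x ^ 2 - 1) * (x ^ 4 - x ^ 2 + 1) = -12 * x := by
  have h3 : x ^ 3 = -x := by linear_combination x * hx
  have h4 : x ^ 4 = 1 := by linear_combination (x ^ 2 - 1) * hx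
  have h12 : x ^ 12 = 1 := by rw [show 12 = 4 * 3 from rfl, pow_mul, h4, one_pow]
  rw [h12, h3, h4, hx]
  linear_combination 6 * hx

lemma ree_order_eq_sq_mul_cofactor (l : ℕ) :
    l ^ 12 * (l - 1) * (l ^ 3 + 1) * (l ^ 4 - 1) * (l ^ 6 + 1) =
      (l ^ 2 + 1) ^ 2 *
        (l ^ 12 * (l - 1) * (l ^ 3 + 1) * (l ^ 2 - 1) * (l ^ 4 - l ^ 2 + 1)) := by
  have hpow : l ^ 4 = (l ^ 2) ^ 2 := pow_mul l 2 2
  have h4 : l ^ 4 - 1 = (l ^ 2 + 1) * (l ^ 2 - 1) := hpow ▸ Nat.sq_sub_sq (l ^ 2) 1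
  have h6 : l ^ 6 + 1 = (l ^ 2 + 1) * (l ^ 4 - l ^ 2 + 1) := by
    have hle : l ^ 2 ≤ l ^ 4 := hpow ▸ Nat.le_self_pow two_ne_zero (l ^ 2)
    zify [hle]
    ring
  rw [h4, h6]
  ring

lemma natCast_sq_eq_neg_one_of_dvd {m l : ℕ} (hml : m ∣ l ^ 2 + 1) : (l : ZMod m) ^ 2 = -1 := by
  rw [← add_eq_zero_iff_eq_neg]
  exact_mod_cast (ZMod.natCast_eq_zero_iff _ _).mpr hml

lemma not_dvd_twelve_mul_of_dvd_sq_add_one {p l : ℕ} (hp : p.Prime) (hp2 : p ≠ 2)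
    (hpl : p ∣ l ^ 2 + 1) : ¬ p ∣ 12 * l := by
  have hp3 : p ≠ 3 := by
    rintro rfl
    exact ZMod.mod_four_ne_three_of_sq_eq_neg_one (natCast_sq_eq_neg_one_of_dvd hpl) rfl
  have hl : ¬ p ∣ l := fun h ↦
    hp.not_dvd_one ((Nat.dvd_add_right (dvd_pow h two_ne_zero)).mp hpl)
  rw [show 12 * l = 2 ^ 2 * 3 * l from rfl, hp.dvd_mul, hp.dvd_mul]
  rintro ((h | h) | h)
  · exact hp2 ((Nat.prime_dvd_prime_iff_eq hp Nat.prime_two).mp (hp.dvd_of_dvd_pow h))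
  · exact hp3 ((Nat.prime_dvd_prime_iff_eq hp Nat.prime_three).mp h)
  · exact hl h

lemma not_dvd_ree_cofactor_of_dvd_sq_add_one {p l : ℕ} (hp : p.Prime) (hp2 : p ≠ 2)
    (hpl : p ∣ l ^ 2 + 1) :
    ¬ p ∣ l ^ 12 * (l - 1) * (l ^ 3 + 1) * (l ^ 2 - 1) * (l ^ 4 - l ^ 2 + 1) := by
  have h12 := not_dvd_twelve_mul_of_dvd_sq_add_one hp hp2 hpl
  have hl : 1 ≤ l := Nat.one_le_iff_ne_zero.mpr (by rintro rfl; exact h12 (dvd_zero p))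
  have hl24 : l ^ 2 ≤ l ^ 4 := Nat.pow_le_pow_right hl (by norm_num)
  rw [← ZMod.natCast_eq_zero_iff] at h12 ⊢
  push_cast [hl, Nat.one_le_pow 2 l hl, hl24] at h12 ⊢
  rwa [ree_cofactor_eq_of_sq_eq_neg_one (natCast_sq_eq_neg_one_of_dvd hpl), neg_mul, neg_eq_zero]

lemma factorization_mul_eq_left_of_not_dvd {p a b : ℕ} (hb : ¬ p ∣ b) :
    (a * b).factorization p = a.factorization p := by
  have hb0 : b ≠ 0 := fun h ↦ hb (h ▸ dvd_zero p)
  rcases eq_or_ne a 0 with rfl | ha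
  · rw [zero_mul]
  · rw [Nat.factorization_mul ha hb0, Finsupp.add_apply,
      Nat.factorization_eq_zero_of_not_dvd hb, add_zero]

lemma five_dvd_sq_two_pow_odd_add_one (n : ℕ) : 5 ∣ (2 ^ (2 * n + 1)) ^ 2 + 1 := by
  have h : 4 + 1 ∣ 4 ^ (2 * n + 1) + 1 ^ (2 * n + 1) :=
    Odd.nat_add_dvd_pow_add_pow 4 1 (odd_two_mul_add_one n)
  rwa [one_pow, show 4 = 2 ^ 2 from rfl, pow_right_comm] at h

theorem five_part_of_ree_group_order_general {p l : ℕ} (hp : p.Prime) (hp2 : p ≠ 2)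
    (hpl : p ∣ l ^ 2 + 1) :
    (l ^ 12 * (l - 1) * (l ^ 3 + 1) * (l ^ 4 - 1) * (l ^ 6 + 1)).factorization p =
      2 * (l ^ 2 + 1).factorization p := by
  have hc := not_dvd_ree_cofactor_of_dvd_sq_add_one hp hp2 hpl
  rw [ree_order_eq_sq_mul_cofactor, factorization_mul_eq_left_of_not_dvd hc,
    Nat.factorization_pow, Finsupp.smul_apply, smul_eq_mul]

theorem five_part_of_ree_group_order (n : ℕ) :
    ((2 ^ (2 * n + 1) : ℕ) ^ 12 * ((2 ^ (2 * n + 1) : ℕ) - 1) *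
        ((2 ^ (2 * n + 1) : ℕ) ^ 3 + 1) * ((2 ^ (2 * n + 1) : ℕ) ^ 4 - 1) *
        ((2 ^ (2 * n + 1) : ℕ) ^ 6 + 1)).factorization 5 =
      2 * ((2 ^ (2 * n + 1) : ℕ) ^ 2 + 1).factorization 5 :=
  five_part_of_ree_group_order_general Nat.prime_five (by norm_num)
    (five_dvd_sq_two_pow_odd_add_one n)
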